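/- Let Q be a real 3×3 matrix and Q₀ = Q − (1/3)(tr Q)I₃ its trace-free part. Define the tableau A_Q ⊆ M₃(ℝ) as the ℝ-linear span of the matrices [x] + [y]Q for x, y ∈ ℝ³. Call Q degenerate if there exist R ∈ SO(3) and real numbers x, y, r with either (r = 0 and y = 0) or r² = x² + y², such that R Q₀ R⁻¹ equals the matrix with rows (−2x, 0, 0), (0, x+3r, 3y), (0, −3y, x−3r). Then the following are equivalent: (1) Q is not degenerate; (2) dim A_Q = 6 and there exists a nonzero covector z ∈ ℝ³ such that no nonzero rank-one matrix of the form x·zᵀ (x ∈ ℝ³, x ≠ 0) belongs to A_Q. (Condition (2) is exactly the statement that the tableau A_Q has dimension 6 and admits a non-characteristic covector, which is equivalent to A_Q being involutive with Cartan characters (3,3,0).) -/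

import Mathlib

/-!
Both conditions are governed by whether some `Q - l • 1` has rank at most one. If `(x, y) ≠ 0` lies
in the kernel of `(x, y) ↦ [x] + [y] Q`, then `x × y = 0` and `y ≠ 0`, hence `x = -l y` and
`[y] (Q - l) = 0` for some `l`, so that all columns of `Q - l` are parallel to `y`. Moreover, if
`Q - l = u vᵀ`, then a rotation taking the bisectors of `u` and `v` to the second and third axes
puts the trace-free part of `Q` into the degenerate normal form.

If `[x] + [y] Q = a zᵀ`, contracting with `y` and with `x` shows that `z` is a left eigenvector of
`Q` or annihilates a right eigenvector. When every `Q - l` has rank at least two, all eigenspaces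
are lines, and these conditions confine `z` to finitely many proper subspaces, which do not cover
`ℝ³`.
-/

open Matrix

noncomputable section

/-- Partial derivative in the `j`-th coordinate direction. -/
def pd {m : ℕ} {F : Type*} [NormedAddCommGroup F] [NormedSpace ℝ F]
    (j : Fin m) (f : (Fin m → ℝ) → F) (u : Fin m → ℝ) : F :=
  fderiv ℝ f u (Pi.single j 1)

/-- The special orthogonal group SO(3), as a set of 3×3 real matrices. -/
def SO3 : Set (Matrix (Fin 3) (Fin 3) ℝ) :=
  {A | Aᵀ * A = 1 ∧ A.det = 1}

/-- The skew-symmetric matrix `[v]` associated to `v ∈ ℝ³`, with `[v] w = w × v`. -/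
def crossMat (v : Fin 3 → ℝ) : Matrix (Fin 3) (Fin 3) ℝ :=
  !![0, v 2, -(v 1); -(v 2), 0, v 0; v 1, -(v 0), 0]

/-- The Jacobian matrix of a map `x : ℝ³ → ℝ³`. -/
def jacobian (x : (Fin 3 → ℝ) → (Fin 3 → ℝ)) (u : Fin 3 → ℝ) :
    Matrix (Fin 3) (Fin 3) ℝ :=
  Matrix.of fun i j => pd j x u i

/-- `W(u) = a(u)⁻¹ · Dx(u)`, the coefficient matrix of the coframing `ω = a⁻¹ dx`. -/
def Wmat (a : (Fin 3 → ℝ) → Matrix (Fin 3) (Fin 3) ℝ)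
    (x : (Fin 3 → ℝ) → (Fin 3 → ℝ)) (u : Fin 3 → ℝ) : Matrix (Fin 3) (Fin 3) ℝ :=
  (a u)⁻¹ * jacobian x u

/-- The tableau `A_Q`: the span of the matrices `[x] + [y] Q`. -/
def tableau (Q : Matrix (Fin 3) (Fin 3) ℝ) : Submodule ℝ (Matrix (Fin 3) (Fin 3) ℝ) :=
  Submodule.span ℝ {M | ∃ x y : Fin 3 → ℝ, M = crossMat x + crossMat y * Q}

end

/-- `Q` is degenerate: its trace-free part is SO(3)-conjugate to one of the two
normal forms of equation (2.4) of the paper. -/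
def DegenerateQ (Q : Matrix (Fin 3) (Fin 3) ℝ) : Prop :=
  ∃ R ∈ SO3, ∃ x y r : ℝ,
    ((r = 0 ∧ y = 0) ∨ r ^ 2 = x ^ 2 + y ^ 2) ∧
    R * (Q - ((1 / 3) * Q.trace) • (1 : Matrix (Fin 3) (Fin 3) ℝ)) * R⁻¹ =
      !![-(2 * x), 0, 0; 0, x + 3 * r, 3 * y; 0, -(3 * y), x - 3 * r]

section Matrices

variable {m n K : Type*} [Fintype n] [Field K]

lemma exists_eq_vecMulVec_of_rank_le_one [Nonempty m] {M : Matrix m n K} (hM : M.rank ≤ 1) :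
    ∃ u v, u ≠ 0 ∧ M = vecMulVec u v := by
  classical
  obtain ⟨u, hu⟩ := ((LinearMap.range M.mulVecLin).finrank_le_one_iff_isPrincipal.1 hM).principal
  have hcol (j : n) : ∃ c : K, c • u = M.col j := by
    rw [← Submodule.mem_span_singleton, ← hu]
    exact ⟨Pi.single j 1, by simp⟩
  choose v hv using hcol
  have hMuv : M = vecMulVec u v := by
    ext i j
    rw [vecMulVec_apply, mul_comm]
    exact (congrFun (hv j) i).symm
  by_cases hu0 : u = 0
  · exact ⟨1, 0, one_ne_zero, by simp [hMuv, hu0]⟩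
  · exact ⟨u, v, hu0, hMuv⟩

lemma exists_ne_zero_mulVec_eq_zero_of_card_lt [Fintype m] (A : Matrix m n K)
    (h : Fintype.card m < Fintype.card n) : ∃ v ≠ 0, A *ᵥ v = 0 := by
  have hker : LinearMap.ker A.mulVecLin ≠ ⊥ := LinearMap.ker_ne_bot_of_finrank_lt (by simpa using h)
  obtain ⟨v, hv, hv0⟩ := Submodule.exists_mem_ne_zero_of_ne_bot hker
  exact ⟨v, hv0, hv⟩

lemma eq_zero_of_vecMulVec_transpose_eq_neg {ι R : Type*} [CommRing R] [NoZeroDivisors R]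
    [CharZero R] {a z : ι → R} (hz : z ≠ 0) (h : (vecMulVec a z)ᵀ = -vecMulVec a z) : a = 0 := by
  have hskew (i j : ι) : a j * z i = -(a i * z j) := congrFun (congrFun h i) j
  obtain ⟨j, hj⟩ := Function.ne_iff.1 hz
  have haj : a j = 0 := (mul_eq_zero.1 (self_eq_neg.1 (hskew j j))).resolve_right hj
  ext i
  exact (mul_eq_zero.1 (by simpa [haj] using hskew i j)).resolve_right hj

variable [DecidableEq n]

lemma conj_sub_smul_one {R : Matrix n n K} (hR : IsUnit R) (M : Matrix n n K) (l : K) :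
    R * (M - l • 1) * R⁻¹ = R * M * R⁻¹ - l • 1 := by
  simp [mul_sub, sub_mul, mul_nonsing_inv R ((isUnit_iff_isUnit_det R).1 hR)]

lemma rank_conj_sub_smul_one {R : Matrix n n K} (hR : IsUnit R) (M : Matrix n n K) (l : K) :
    (R * M * R⁻¹ - l • 1).rank = (M - l • 1).rank := by
  have hdet : IsUnit R.det := (isUnit_iff_isUnit_det R).1 hR
  rw [← conj_sub_smul_one hR, rank_mul_eq_left_of_isUnit_det _ _ (isUnit_nonsing_inv_det R hdet),
    rank_mul_eq_right_of_isUnit_det _ _ hdet]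

end Matrices

section GenericCovector

variable {n K : Type*} [Fintype n] [Field K]

lemma exists_forall_dotProduct_ne_zero [Infinite K] {ι : Type*} [Finite ι] (v : ι → n → K)
    (hv : ∀ i, v i ≠ 0) : ∃ z, ∀ i, z ⬝ᵥ v i ≠ 0 := by
  classical
  obtain ⟨z, hz⟩ := Module.Dual.exists_forall_ne_zero_of_forall_exists
    (fun i ↦ dotProductEquiv K n (v i)) fun i ↦ by
      by_contra! h
      exact hv i (dotProduct_eq_zero _ h)
  exact ⟨z, fun i ↦ by simpa [dotProduct_comm] using hz i⟩

lemma exists_smul_eq_of_card_le_rank_add_one [Nonempty n] {M : Matrix n n K}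
    (hM : Fintype.card n ≤ M.rank + 1) : ∃ k ≠ 0, ∀ w, M *ᵥ w = 0 → ∃ t : K, t • k = w := by
  have hker : Module.finrank K (LinearMap.ker M.mulVecLin) ≤ 1 := by
    have := LinearMap.finrank_range_add_finrank_ker M.mulVecLin
    rw [Module.finrank_pi] at this
    unfold Matrix.rank at hM
    omega
  obtain ⟨k, hk⟩ := ((LinearMap.ker M.mulVecLin).finrank_le_one_iff_isPrincipal.1 hker).principal
  have hspan (w : n → K) (hw : M *ᵥ w = 0) : ∃ t : K, t • k = w := by
    rwa [← Submodule.mem_span_singleton, ← hk]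
  by_cases hk0 : k = 0
  · refine ⟨1, one_ne_zero, fun w hw ↦ ⟨0, ?_⟩⟩
    obtain ⟨t, rfl⟩ := hspan w hw
    simp [hk0]
  · exact ⟨k, hk0, hspan⟩

variable [DecidableEq n]

lemma finite_setOf_det_sub_smul_one_eq_zero (Q : Matrix n n K) :
    {l : K | (Q - l • 1).det = 0}.Finite := by
  refine Q.finite_spectrum.subset fun l hl ↦ ?_
  rw [spectrum.mem_iff, isUnit_iff_isUnit_det, Algebra.algebraMap_eq_smul_one, ← neg_sub, det_neg]
  simp [hl.out]

/-- The finitely many vectors to be avoided are a generator of the eigenspace and a nonzero column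
of `Q - l • 1`, for each eigenvalue `l`. -/
theorem exists_not_left_eigenvector_forall_dotProduct_eigenvector_ne_zero [Infinite K]
    [Nontrivial n] {Q : Matrix n n K} (hQ : ∀ l : K, Fintype.card n ≤ (Q - l • 1).rank + 1) :
    ∃ z, (∀ l : K, z ᵥ* Q ≠ l • z) ∧
      ∀ (l : K) (k : n → K), k ≠ 0 → Q *ᵥ k = l • k → z ⬝ᵥ k ≠ 0 := by
  have hcol (l : K) : ∃ j, (Q - l • 1).col j ≠ 0 := by
    by_contra! h
    have hzero : Q - l • 1 = 0 := by
      ext i j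
      exact congrFun (h j) i
    have hcard := hQ l
    rw [hzero, rank_zero] at hcard
    exact absurd hcard (not_le.2 Fintype.one_lt_card)
  choose j hj using hcol
  choose k hk0 hk using fun l ↦ exists_smul_eq_of_card_le_rank_add_one (hQ l)
  let S : Set K := insert 0 {l | (Q - l • 1).det = 0}
  have : Finite S := ((finite_setOf_det_sub_smul_one_eq_zero Q).insert 0).to_subtype
  obtain ⟨z, hz⟩ := exists_forall_dotProduct_ne_zero
    (Sum.elim (fun l : S ↦ (Q - l.1 • 1).col (j l)) fun l : S ↦ k l)
    (by rintro (l | l); exacts [hj l, hk0 l])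
  have hz0 : z ≠ 0 := by
    rintro rfl
    exact hz (.inr ⟨0, .inl rfl⟩) (zero_dotProduct _)
  refine ⟨z, fun l hl ↦ ?_, fun l w hw hQw hzw ↦ ?_⟩
  · have hzQ : z ᵥ* (Q - l • 1) = 0 := by simp [vecMul_sub, vecMul_smul, hl]
    have hl : l ∈ S := .inr (exists_vecMul_eq_zero_iff.1 ⟨z, hz0, hzQ⟩)
    exact hz (.inl ⟨l, hl⟩) (congrFun hzQ (j l))
  · have hwQ : (Q - l • 1) *ᵥ w = 0 := by simp [sub_mulVec, smul_mulVec, hQw]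
    have hl : l ∈ S := .inr (exists_mulVec_eq_zero_iff.1 ⟨w, hw, hwQ⟩)
    obtain ⟨t, rfl⟩ := hk l w hwQ
    rw [dotProduct_smul, smul_eq_mul, mul_eq_zero] at hzw
    exact hzw.elim (left_ne_zero_of_smul hw) (hz (.inr ⟨l, hl⟩))

end GenericCovector

section CrossMat

lemma exists_eq_smul_of_cross_eq_zero {F : Type*} [Field F] {v w : Fin 3 → F} (hv : v ≠ 0)
    (h : v ⨯₃ w = 0) : ∃ c : F, w = c • v := by
  by_contra! hne
  exact crossProduct_ne_zero_iff_linearIndependent.2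
    ((LinearIndependent.pair_iff' hv).2 fun c ↦ (hne c).symm) h

lemma crossMat_mulVec (v w : Fin 3 → ℝ) : crossMat v *ᵥ w = w ⨯₃ v := by
  ext i
  fin_cases i <;> simp [crossMat, cross_apply, mulVec, dotProduct, Fin.sum_univ_three] <;> ring

lemma crossMat_transpose (v : Fin 3 → ℝ) : (crossMat v)ᵀ = -crossMat v := by
  ext i j
  fin_cases i <;> fin_cases j <;> simp [crossMat]

lemma vecMul_crossMat (v w : Fin 3 → ℝ) : w ᵥ* crossMat v = v ⨯₃ w := by
  rw [← mulVec_transpose, crossMat_transpose, neg_mulVec, crossMat_mulVec, cross_anticomm]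

lemma crossMat_add (v w : Fin 3 → ℝ) : crossMat (v + w) = crossMat v + crossMat w := by
  ext i j
  fin_cases i <;> fin_cases j <;> simp [crossMat] <;> ring

lemma crossMat_smul (c : ℝ) (v : Fin 3 → ℝ) : crossMat (c • v) = c • crossMat v := by
  ext i j
  fin_cases i <;> fin_cases j <;> simp [crossMat]

lemma crossMat_eq_zero_iff {v : Fin 3 → ℝ} : crossMat v = 0 ↔ v = 0 := by
  refine ⟨fun h ↦ ?_, fun h ↦ by simpa [h] using crossMat_smul 0 0⟩
  ext i
  fin_cases i
  · exact congrFun (congrFun h 1) 2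
  · exact congrFun (congrFun h 2) 0
  · exact congrFun (congrFun h 0) 1

lemma crossMat_mul_eq_zero_iff {n : Type*} {y : Fin 3 → ℝ} (hy : y ≠ 0)
    {M : Matrix (Fin 3) n ℝ} : crossMat y * M = 0 ↔ ∃ v, M = vecMulVec y v := by
  refine ⟨fun h ↦ ?_, ?_⟩
  · have hcol (j : n) : ∃ c : ℝ, M.col j = c • y := by
      refine exists_eq_smul_of_cross_eq_zero hy ?_
      rw [← cross_anticomm, ← crossMat_mulVec, neg_eq_zero]
      ext i
      exact congrFun (congrFun h i) j
    choose v hv using hcol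
    refine ⟨v, ?_⟩
    ext i j
    rw [vecMulVec_apply, mul_comm]
    exact congrFun (hv j) i
  · rintro ⟨v, rfl⟩
    rw [mul_vecMulVec, crossMat_mulVec, cross_self, zero_vecMulVec]

end CrossMat

section Tableau

variable (Q : Matrix (Fin 3) (Fin 3) ℝ)

/-- The parametrization `(x, y) ↦ [x] + [y] Q` of the tableau `A_Q`. -/
def tableauMap : (Fin 3 → ℝ) × (Fin 3 → ℝ) →ₗ[ℝ] Matrix (Fin 3) (Fin 3) ℝ where
  toFun p := crossMat p.1 + crossMat p.2 * Q
  map_add' p q := by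
    simp only [Prod.fst_add, Prod.snd_add, crossMat_add, Matrix.add_mul]
    abel
  map_smul' c p := by simp [crossMat_smul]

lemma tableauMap_apply (x y : Fin 3 → ℝ) : tableauMap Q (x, y) = crossMat x + crossMat y * Q := rfl

lemma tableau_eq_range : tableau Q = LinearMap.range (tableauMap Q) := by
  rw [tableau, ← Submodule.span_eq (LinearMap.range (tableauMap Q))]
  congr 1
  ext M
  simp [tableauMap_apply, eq_comm]

lemma vecMul_snd_tableauMap (x y : Fin 3 → ℝ) : y ᵥ* tableauMap Q (x, y) = x ⨯₃ y := by
  simp [tableauMap_apply, vecMul_add, ← vecMul_vecMul, vecMul_crossMat]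

lemma vecMul_fst_tableauMap (x y : Fin 3 → ℝ) : x ᵥ* tableauMap Q (x, y) = (y ⨯₃ x) ᵥ* Q := by
  simp [tableauMap_apply, vecMul_add, ← vecMul_vecMul, vecMul_crossMat]

lemma tableauMap_neg_smul (l : ℝ) (y : Fin 3 → ℝ) :
    tableauMap Q (-l • y, y) = crossMat y * (Q - l • 1) := by
  simp only [tableauMap_apply, crossMat_smul, mul_sub, mul_smul_comm, mul_one]
  module

variable {Q}

lemma exists_tableauMap_eq_crossMat_mul {x y : Fin 3 → ℝ} (hy : y ≠ 0) (h : x ⨯₃ y = 0) :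
    ∃ l : ℝ, tableauMap Q (x, y) = crossMat y * (Q - l • 1) := by
  obtain ⟨c, rfl⟩ : ∃ c : ℝ, x = c • y :=
    exists_eq_smul_of_cross_eq_zero hy (by rw [← cross_anticomm, h, neg_zero])
  exact ⟨-c, by rw [← tableauMap_neg_smul, neg_neg]⟩

lemma tableauMap_injective_iff :
    Function.Injective (tableauMap Q) ↔ ∀ l : ℝ, 1 < (Q - l • 1).rank := by
  rw [injective_iff_map_eq_zero]
  refine ⟨fun hinj l ↦ ?_, fun hQ ↦ ?_⟩
  · by_contra! hl
    obtain ⟨y, v, hy, hyv⟩ := exists_eq_vecMulVec_of_rank_le_one hl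
    have hzero : tableauMap Q (-l • y, y) = 0 := by
      rw [tableauMap_neg_smul, crossMat_mul_eq_zero_iff hy]
      exact ⟨v, hyv⟩
    exact hy (congrArg Prod.snd (hinj _ hzero))
  · rintro ⟨x, y⟩ hxy
    by_cases hy : y = 0
    · have hx : crossMat x = 0 := by
        simpa [tableauMap_apply, hy, crossMat_eq_zero_iff.2] using hxy
      rw [hy, crossMat_eq_zero_iff.1 hx, Prod.mk_zero_zero]
    · have hcross : x ⨯₃ y = 0 := by rw [← vecMul_snd_tableauMap Q, hxy, vecMul_zero]
      obtain ⟨l, hl⟩ := exists_tableauMap_eq_crossMat_mul (Q := Q) hy hcross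
      obtain ⟨v, hv⟩ := (crossMat_mul_eq_zero_iff hy).1 (hl.symm.trans hxy)
      exact absurd (hQ l) (by rw [hv, not_lt]; exact rank_vecMulVec_le y v)

lemma finrank_tableau_eq_six_iff :
    Module.finrank ℝ (tableau Q) = 6 ↔ ∀ l : ℝ, 1 < (Q - l • 1).rank := by
  have hdim := LinearMap.finrank_range_add_finrank_ker (tableauMap Q)
  simp only [Module.finrank_prod, Module.finrank_fin_fun] at hdim
  rw [← tableauMap_injective_iff, ← LinearMap.ker_eq_bot, ← Submodule.finrank_eq_zero (R := ℝ),
    tableau_eq_range]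
  omega

lemma exists_mulVec_eq_zero_and_dotProduct_eq_zero {N : Matrix (Fin 3) (Fin 3) ℝ}
    {a y z : Fin 3 → ℝ} (hy : y ≠ 0) (h : crossMat y * N = vecMulVec a z) :
    ∃ k ≠ 0, N *ᵥ k = 0 ∧ z ⬝ᵥ k = 0 := by
  obtain ⟨k, hk0, hk⟩ := exists_ne_zero_mulVec_eq_zero_of_card_lt (of ![z, y ᵥ* N]) (by simp)
  have hzk : z ⬝ᵥ k = 0 := congrFun hk 0
  have hyk : y ⬝ᵥ N *ᵥ k = 0 := by rw [dotProduct_mulVec]; exact congrFun hk 1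
  have hcross : y ⨯₃ (N *ᵥ k) = 0 := by
    rw [← cross_anticomm, ← crossMat_mulVec, mulVec_mulVec, h, vecMulVec_mulVec, hzk]
    simp
  obtain ⟨t, ht⟩ := exists_eq_smul_of_cross_eq_zero hy hcross
  have ht0 : t = 0 := by simpa [ht, hy] using hyk
  exact ⟨k, hk0, by rw [ht, ht0, zero_smul], hzk⟩

theorem left_eigenvector_or_eigenvector_dotProduct_eq_zero {a z : Fin 3 → ℝ} (ha : a ≠ 0)
    (hz : z ≠ 0) (h : vecMulVec a z ∈ tableau Q) :
    (∃ l : ℝ, z ᵥ* Q = l • z) ∨ ∃ (l : ℝ) (k : _), k ≠ 0 ∧ Q *ᵥ k = l • k ∧ z ⬝ᵥ k = 0 := by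
  rw [tableau_eq_range] at h
  obtain ⟨⟨x, y⟩, hxy⟩ := h
  have hcross : x ⨯₃ y = (y ⬝ᵥ a) • z := by
    rw [← vecMul_snd_tableauMap Q, hxy, vecMul_vecMulVec]
  have hQ : (y ⬝ᵥ a) • z ᵥ* Q = -(x ⬝ᵥ a) • z := by
    rw [← smul_vecMul, ← hcross, ← cross_anticomm, neg_vecMul, ← vecMul_fst_tableauMap, hxy,
      vecMul_vecMulVec, neg_smul]
  by_cases hya : y ⬝ᵥ a = 0
  · right
    have hy : y ≠ 0 := by
      rintro rfl
      refine ha (eq_zero_of_vecMulVec_transpose_eq_neg hz ?_)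
      rw [← hxy, tableauMap_apply, crossMat_eq_zero_iff.2 rfl, zero_mul, add_zero,
        crossMat_transpose]
    obtain ⟨l, hl⟩ := exists_tableauMap_eq_crossMat_mul (Q := Q) hy (by rw [hcross, hya, zero_smul])
    obtain ⟨k, hk0, hk, hzk⟩ := exists_mulVec_eq_zero_and_dotProduct_eq_zero hy (hl.symm.trans hxy)
    refine ⟨l, k, hk0, ?_, hzk⟩
    simpa [sub_mulVec, smul_mulVec, sub_eq_zero] using hk
  · left
    refine ⟨(y ⬝ᵥ a)⁻¹ * -(x ⬝ᵥ a), ?_⟩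
    rw [mul_smul, ← hQ, inv_smul_smul₀ hya]

theorem exists_covector_forall_vecMulVec_notMem_tableau (hQ : ∀ l : ℝ, 1 < (Q - l • 1).rank) :
    ∃ z : Fin 3 → ℝ, z ≠ 0 ∧ ∀ x : Fin 3 → ℝ, x ≠ 0 → vecMulVec x z ∉ tableau Q := by
  obtain ⟨z, hleft, hright⟩ :=
    exists_not_left_eigenvector_forall_dotProduct_eigenvector_ne_zero (Q := Q)
      fun l ↦ Nat.succ_le_succ (hQ l)
  have hz : z ≠ 0 := by
    rintro rfl
    exact hleft 0 (by simp)
  refine ⟨z, hz, fun a ha hmem ↦ ?_⟩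
  rcases left_eigenvector_or_eigenvector_dotProduct_eq_zero ha hz hmem with
    ⟨l, hl⟩ | ⟨l, k, hk, hQk, hzk⟩
  · exact hleft l hl
  · exact hright l k hk hQk hzk

end Tableau

section Rotation

open scoped InnerProductSpace

lemma exists_orthonormalBasis_eq_norm_smul {𝕜 E ι : Type*} [RCLike 𝕜] [NormedAddCommGroup E]
    [InnerProductSpace 𝕜 E] [FiniteDimensional 𝕜 E] [Fintype ι]
    (hcard : Module.finrank 𝕜 E = Fintype.card ι) {f : ι → E}
    (hf : Pairwise fun i j ↦ ⟪f i, f j⟫_𝕜 = 0) :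
    ∃ b : OrthonormalBasis ι 𝕜 E, ∀ i, f i = (‖f i‖ : 𝕜) • b i := by
  have hunit : Orthonormal 𝕜 ({i | f i ≠ 0}.domRestrict fun i ↦ (‖f i‖⁻¹ : 𝕜) • f i) := by
    refine ⟨fun i ↦ norm_smul_inv_norm i.2, fun i j hij ↦ ?_⟩
    simp [inner_smul_left, inner_smul_right, hf (Subtype.coe_ne_coe.2 hij)]
  obtain ⟨b, hb⟩ := hunit.exists_orthonormalBasis_extension_of_card_eq hcard
  refine ⟨b, fun i ↦ ?_⟩
  by_cases hi : f i = 0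
  · simp [hi]
  · rw [hb i hi, smul_inv_smul₀ (by simpa using hi)]

variable {n : Type*} [Fintype n] [DecidableEq n]

lemma exists_orthogonal_mulVec_eq_single {f : n → n → ℝ}
    (hf : Pairwise fun i j ↦ f i ⬝ᵥ f j = 0) :
    ∃ R : Matrix n n ℝ, R * Rᵀ = 1 ∧ ∀ i, ∃ c : ℝ, R *ᵥ f i = Pi.single i c := by
  obtain ⟨b, hb⟩ := exists_orthonormalBasis_eq_norm_smul (𝕜 := ℝ) (E := EuclideanSpace ℝ n)
    finrank_euclideanSpace (f := fun i ↦ WithLp.toLp 2 (f i))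
    fun i j hij ↦ by simpa [EuclideanSpace.inner_toLp_toLp] using hf hij.symm
  have hdot (i j : n) : (b i).ofLp ⬝ᵥ (b j).ofLp = if i = j then 1 else 0 := by
    rw [← orthonormal_iff_ite.1 b.orthonormal i j, dotProduct_comm]
    rfl
  refine ⟨of fun i ↦ (b i).ofLp, ?_, fun i ↦ ⟨‖WithLp.toLp 2 (f i)‖, ?_⟩⟩
  · ext i j
    rw [one_apply, ← hdot]
    rfl
  · have hfi : f i = ‖WithLp.toLp 2 (f i)‖ • (b i).ofLp := congrArg WithLp.ofLp (hb i)
    ext j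
    rw [Pi.single_apply]
    conv_lhs => rw [hfi]
    simp [mulVec, hdot]

lemma exists_rotation_mulVec_eq_single [Nonempty n] {f : n → n → ℝ}
    (hf : Pairwise fun i j ↦ f i ⬝ᵥ f j = 0) :
    ∃ R : Matrix n n ℝ, Rᵀ * R = 1 ∧ R.det = 1 ∧ ∀ i, ∃ c : ℝ, R *ᵥ f i = Pi.single i c := by
  obtain ⟨R, hR, hRf⟩ := exists_orthogonal_mulVec_eq_single hf
  have hdet : R.det * R.det = 1 := by simpa using congrArg det hR
  let s : n → ℝ := Function.update 1 (Classical.arbitrary n) R.det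
  have hs : diagonal s * diagonal s = 1 := by
    rw [diagonal_mul_diagonal, ← diagonal_one]
    congr 1
    ext i
    by_cases hi : i = Classical.arbitrary n <;> simp [s, hi, hdet]
  refine ⟨diagonal s * R, ?_, ?_, fun i ↦ ?_⟩
  · rw [transpose_mul, diagonal_transpose, Matrix.mul_assoc, ← Matrix.mul_assoc (diagonal s), hs,
      Matrix.one_mul, mul_eq_one_comm.1 hR]
  · simp [s, Finset.prod_update_of_mem, hdet]
  · obtain ⟨c, hc⟩ := hRf i
    exact ⟨s i * c, by rw [← mulVec_mulVec, hc, diagonal_mulVec_single]⟩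

end Rotation

section Degenerate

variable {Q : Matrix (Fin 3) (Fin 3) ℝ}

lemma isUnit_of_mem_SO3 {R : Matrix (Fin 3) (Fin 3) ℝ} (hR : R ∈ SO3) : IsUnit R :=
  .of_mul_eq_one_right _ hR.1

lemma exists_SO3_mulVec_eq_of_dotProduct_eq_zero {p q : Fin 3 → ℝ} (hpq : p ⬝ᵥ q = 0) :
    ∃ R ∈ SO3, ∃ α β : ℝ, R *ᵥ p = ![0, α, 0] ∧ R *ᵥ q = ![0, 0, β] := by
  have horth : Pairwise fun i j ↦ ![0, p, q] i ⬝ᵥ ![0, p, q] j = 0 := by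
    intro i j hij
    fin_cases i <;> fin_cases j <;> simp_all [dotProduct_comm]
  obtain ⟨R, hR, hdet, hRf⟩ := exists_rotation_mulVec_eq_single horth
  obtain ⟨α, hα⟩ := hRf 1
  obtain ⟨β, hβ⟩ := hRf 2
  refine ⟨R, ⟨hR, hdet⟩, α, β, hα.trans ?_, hβ.trans ?_⟩ <;>
  · ext i
    fin_cases i <;> simp

/-- The vectors `‖v‖ u ± ‖u‖ v` span the bisectors of `u` and `v`. -/
lemma exists_vecMulVec_eq_smul_add_sub {n : Type*} [Fintype n] (u v : n → ℝ) :
    ∃ (c : ℝ) (p q : n → ℝ), p ⬝ᵥ q = 0 ∧ vecMulVec u v = c • vecMulVec (p + q) (p - q) := by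
  by_cases huv : u = 0 ∨ v = 0
  · exact ⟨0, 0, 0, by simp, by rcases huv with rfl | rfl <;> simp⟩
  push Not at huv
  have hupos : 0 < u ⬝ᵥ u := by simpa using dotProduct_star_self_pos_iff.2 huv.1
  have hvpos : 0 < v ⬝ᵥ v := by simpa using dotProduct_star_self_pos_iff.2 huv.2
  have hu : √(u ⬝ᵥ u) ≠ 0 := (Real.sqrt_pos.2 hupos).ne'
  have hv : √(v ⬝ᵥ v) ≠ 0 := (Real.sqrt_pos.2 hvpos).ne'
  have husq : √(u ⬝ᵥ u) ^ 2 = u ⬝ᵥ u := Real.sq_sqrt hupos.le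
  have hvsq : √(v ⬝ᵥ v) ^ 2 = v ⬝ᵥ v := Real.sq_sqrt hvpos.le
  refine ⟨(4 * (√(u ⬝ᵥ u) * √(v ⬝ᵥ v)))⁻¹, √(v ⬝ᵥ v) • u + √(u ⬝ᵥ u) • v,
    √(v ⬝ᵥ v) • u - √(u ⬝ᵥ u) • v, ?_, ?_⟩
  · simp only [add_dotProduct, dotProduct_sub, smul_dotProduct, dotProduct_smul, smul_eq_mul,
      dotProduct_comm v u]
    linear_combination √(v ⬝ᵥ v) ^ 2 * -husq + √(u ⬝ᵥ u) ^ 2 * hvsq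
  · ext i j
    simp only [Matrix.smul_apply, vecMulVec_apply, Pi.add_apply, Pi.sub_apply, Pi.smul_apply,
      smul_eq_mul]
    field_simp
    ring

lemma exists_SO3_conj_vecMulVec_eq (u v : Fin 3 → ℝ) :
    ∃ R ∈ SO3, ∃ c α β : ℝ,
      R * vecMulVec u v * R⁻¹ = c • vecMulVec ![0, α, β] ![0, α, -β] := by
  obtain ⟨c, p, q, hpq, huv⟩ := exists_vecMulVec_eq_smul_add_sub u v
  obtain ⟨R, hR, α, β, hp, hq⟩ := exists_SO3_mulVec_eq_of_dotProduct_eq_zero hpq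
  refine ⟨R, hR, c, α, β, ?_⟩
  rw [inv_eq_left_inv hR.1, huv, mul_smul_comm, smul_mul_assoc, mul_vecMulVec, vecMulVec_mul,
    vecMul_transpose, mulVec_add, mulVec_sub, hp, hq]
  simp

/-- The normal forms of equation (2.4) of the paper, for the trace-free part of a degenerate `Q`. -/
def degenerateNormalForm (x y r : ℝ) : Matrix (Fin 3) (Fin 3) ℝ :=
  !![-(2 * x), 0, 0; 0, x + 3 * r, 3 * y; 0, -(3 * y), x - 3 * r]

lemma exists_degenerateNormalForm_sub_smul_one_eq_vecMulVec {x y r : ℝ}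
    (h : (r = 0 ∧ y = 0) ∨ r ^ 2 = x ^ 2 + y ^ 2) :
    ∃ (l : ℝ) (u v : Fin 3 → ℝ), degenerateNormalForm x y r - l • 1 = vecMulVec u v := by
  rcases h with ⟨rfl, rfl⟩ | hr
  · refine ⟨x, ![1, 0, 0], ![-(2 * x) - x, 0, 0], ?_⟩
    ext i j
    fin_cases i <;> fin_cases j <;> simp [degenerateNormalForm]
  by_cases hxr : x + r = 0
  · obtain rfl : r = -x := by linear_combination hxr
    obtain rfl : y = 0 := by simpa using hr
    refine ⟨-(2 * x), ![0, 0, 1], ![0, 0, 6 * x], ?_⟩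
    ext i j
    fin_cases i <;> fin_cases j <;> simp [degenerateNormalForm] <;> ring
  · have hcorner : x - 3 * r + 2 * x = -(y * (3 * y / (x + r))) := by
      field_simp
      linear_combination -3 * hr
    have hoff : 3 * y = (x + r) * (3 * y / (x + r)) := by field_simp
    refine ⟨-(2 * x), ![0, x + r, -y], ![0, 3, 3 * y / (x + r)], ?_⟩
    ext i j
    fin_cases i <;> fin_cases j <;> simp [degenerateNormalForm, hcorner, ← hoff] <;> ring

lemma exists_rank_sub_smul_one_le_one_of_degenerateQ (h : DegenerateQ Q) :
    ∃ l : ℝ, (Q - l • 1).rank ≤ 1 := by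
  obtain ⟨R, hR, x, y, r, hr, hQ⟩ := h
  obtain ⟨l, u, v, hl⟩ := exists_degenerateNormalForm_sub_smul_one_eq_vecMulVec hr
  refine ⟨1 / 3 * Q.trace + l, ?_⟩
  rw [add_smul, ← sub_sub, ← rank_conj_sub_smul_one (isUnit_of_mem_SO3 hR), hQ,
    ← degenerateNormalForm, hl]
  exact rank_vecMulVec_le u v

lemma degenerateQ_of_rank_sub_smul_one_le_one {l : ℝ} (h : (Q - l • 1).rank ≤ 1) :
    DegenerateQ Q := by
  obtain ⟨u, v, -, huv⟩ := exists_eq_vecMulVec_of_rank_le_one h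
  obtain ⟨R, hR, c, α, β, hconj⟩ := exists_SO3_conj_vecMulVec_eq u v
  have hRQ : R * Q * R⁻¹ = l • 1 + c • vecMulVec ![0, α, β] ![0, α, -β] := by
    rw [← hconj, ← huv, conj_sub_smul_one (isUnit_of_mem_SO3 hR), add_sub_cancel]
  have htrace : Q.trace = 3 * l + c * (α ^ 2 - β ^ 2) := by
    rw [← trace_conj (isUnit_of_mem_SO3 hR) Q, hRQ]
    simp only [trace_add, trace_smul, trace_one, trace_vecMulVec, vec3_dotProduct', smul_eq_mul,
      Fintype.card_fin]
    push_cast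
    ring
  refine ⟨R, hR, c * (α ^ 2 - β ^ 2) / 6, -(c * α * β) / 3, c * (α ^ 2 + β ^ 2) / 6,
    .inr (by ring), ?_⟩
  rw [conj_sub_smul_one (isUnit_of_mem_SO3 hR), htrace, hRQ]
  ext i j
  fin_cases i <;> fin_cases j <;> simp <;> ring

theorem degenerateQ_iff_exists_rank_sub_smul_one_le_one :
    DegenerateQ Q ↔ ∃ l : ℝ, (Q - l • 1).rank ≤ 1 :=
  ⟨exists_rank_sub_smul_one_le_one_of_degenerateQ,
    fun ⟨_, h⟩ ↦ degenerateQ_of_rank_sub_smul_one_le_one h⟩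

end Degenerate

/-- `Q` is nondegenerate iff the tableau `A_Q` has dimension 6 and admits
a non-characteristic covector (Proposition 2.3 and Corollary 2.5 of the paper). -/
theorem tableau_involutive_iff_not_degenerate (Q : Matrix (Fin 3) (Fin 3) ℝ) :
    ¬ DegenerateQ Q ↔
      (Module.finrank ℝ (tableau Q) = 6 ∧
        ∃ z : Fin 3 → ℝ, z ≠ 0 ∧
          ∀ x : Fin 3 → ℝ, x ≠ 0 → Matrix.vecMulVec x z ∉ tableau Q) := by
  simp only [degenerateQ_iff_exists_rank_sub_smul_one_le_one, not_exists, not_le,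
    finrank_tableau_eq_six_iff]
  exact ⟨fun h ↦ ⟨h, exists_covector_forall_vecMulVec_notMem_tableau h⟩, And.left⟩
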